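/- For every 0 ≤ α < ω₁ there exist a completely regular topological space X and a subset E ⊆ X such that E is (α+1)-embedded in X but E is not α-embedded in X. -/

import Mathlib

/-!
Fix a set `Q` in the Cantor space `2^ω` of additive but not of multiplicative class `α`; it exists
by the classical diagonalization of a universal set (`exists_true_not_false`). The ambient space is
the compact space `X = 2^ω × 2^(2^ω × ℝ)`. For `P ⊆ 2^ω` let `piece P` consist of the pairs `(y, x)`
with `y ∈ P`, `x` supported by `P × ℝ`, and `x (y, z) = 1` for some `z`. The example is
`E = piece Q ∪ piece Qᶜ`.

Both pieces are open in `E`: near a point `(y, x)` of `piece P`, a single coordinate `(y, z)` with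
`x (y, z) = 1` excludes the other piece (`isClopen_piece`).

`E` is not `α`-embedded: a set `C` of a functional class in `X` contains both or none of `(y, 0)` and
`(y, 1_{(y, z)})` for all `y`, unless `z` lies in a countable set (`FunClass.spike_iff`). If `C` had
multiplicative class `α` and trace `piece Q` on `E`, then `Q` would be the section
`{y | (y, 0) ∈ C}` of `C`, hence of multiplicative class `α`.

`E` is `(α + 1)`-embedded: each piece is z-embedded in `X` (`piece_zEmbedded`), since by the countable
chain condition in the cube the closure of an open subset of the piece depends on countably many
coordinates, and is therefore the trace of a zero set of `X`. Extensions of the two parts of a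
given set are glued along `Q × 2^(2^ω × ℝ)` and its complement, which both have multiplicative
class `α + 1`.
-/

open Set Topology

/-- A topological space is pseudo-ℵ₁-compact if every locally finite family of
(pairwise distinct) nonempty open subsets is at most countable. -/
def PseudoAleph1Compact (Z : Type*) [TopologicalSpace Z] : Prop :=
  ∀ 𝒰 : Set (Set Z), (∀ U ∈ 𝒰, IsOpen U) → (∀ U ∈ 𝒰, U.Nonempty) →
    LocallyFinite (fun U : 𝒰 => (U : Set Z)) → 𝒰.Countable

/-- `A` is functionally closed in `Z` if it is the zero set of a continuous real function. -/
def FunctionallyClosed {Z : Type*} [TopologicalSpace Z] (A : Set Z) : Prop :=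
  ∃ f : Z → ℝ, Continuous f ∧ A = f ⁻¹' {0}

/-- `A` is functionally open in `Z` if its complement is functionally closed. -/
def FunctionallyOpen {Z : Type*} [TopologicalSpace Z] (A : Set Z) : Prop :=
  FunctionallyClosed Aᶜ

/-- `FunClass Z true α A` : `A` is of the functionally additive class `α` in `Z`;
`FunClass Z false α A` : `A` is of the functionally multiplicative class `α` in `Z`. -/
inductive FunClass (Z : Type*) [TopologicalSpace Z] : Bool → Ordinal.{0} → Set Z → Prop
  | open_ (A : Set Z) (h : FunctionallyOpen A) : FunClass Z true 0 A
  | closed_ (A : Set Z) (h : FunctionallyClosed A) : FunClass Z false 0 A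
  | union (α : Ordinal.{0}) (A : ℕ → Set Z) (β : ℕ → Ordinal.{0}) (hα : α ≠ 0)
      (hβ : ∀ n, β n < α) (h : ∀ n, FunClass Z false (β n) (A n)) :
      FunClass Z true α (⋃ n, A n)
  | inter (α : Ordinal.{0}) (A : ℕ → Set Z) (β : ℕ → Ordinal.{0}) (hα : α ≠ 0)
      (hβ : ∀ n, β n < α) (h : ∀ n, FunClass Z true (β n) (A n)) :
      FunClass Z false α (⋂ n, A n)

/-- `A` is α-embedded in `Z` if every subset of `A` of functionally multiplicative class `α`
in the subspace `A` is the trace on `A` of a set of functionally multiplicative class `α` in `Z`. -/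
def IsAlphaEmbedded {Z : Type*} [TopologicalSpace Z] (α : Ordinal.{0}) (A : Set Z) : Prop :=
  ∀ B : Set Z, B ⊆ A → FunClass ↥A false α (Subtype.val ⁻¹' B) →
    ∃ C : Set Z, FunClass Z false α C ∧ C ∩ A = B

/-- `Z` is α-universal if every subset of `Z` is α-embedded in `Z`. -/
def AlphaUniversal (Z : Type*) [TopologicalSpace Z] (α : Ordinal.{0}) : Prop :=
  ∀ A : Set Z, IsAlphaEmbedded α A

/-- The projection of the product `∀ t, X t` onto the coordinates in `S`. -/
def proj {T : Type*} {X : T → Type*} (S : Set T) (x : ∀ t, X t) : ∀ t : S, X t.1 :=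
  fun t => x t.1

/-- A functionally measurable (Baire) set: a member of some functionally additive or
multiplicative class `α` with `α < ω₁`. -/
def FunctionallyMeasurable {Z : Type*} [TopologicalSpace Z] (A : Set Z) : Prop :=
  ∃ (b : Bool) (β : Ordinal.{0}), β < (Cardinal.aleph 1).ord ∧ FunClass Z b β A

/-- `Y` has a regular `Gδ`-diagonal. -/
def RegularGDeltaDiagonal (Y : Type*) [TopologicalSpace Y] : Prop :=
  ∃ G : ℕ → Set (Y × Y), (∀ n, IsOpen (G n)) ∧
    {p : Y × Y | p.1 = p.2} = ⋂ n, G n ∧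
    {p : Y × Y | p.1 = p.2} = ⋂ n, closure (G n)

/-! ### Functional classes: elementary closure properties -/

section Classes

variable {Z W : Type*} [TopologicalSpace Z] [TopologicalSpace W]

lemma FunctionallyClosed.preimage {A : Set Z} (h : FunctionallyClosed A) {g : W → Z}
    (hg : Continuous g) : FunctionallyClosed (g ⁻¹' A) := by
  obtain ⟨f, hf, rfl⟩ := h
  exact ⟨f ∘ g, hf.comp hg, rfl⟩

lemma IsClosed.functionallyClosed [TopologicalSpace.MetrizableSpace Z] {A : Set Z} (h : IsClosed A) :
    FunctionallyClosed A := by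
  let := TopologicalSpace.metrizableSpaceMetric Z
  rcases A.eq_empty_or_nonempty with rfl | hne
  · exact ⟨fun _ => 1, continuous_const, by ext; simp⟩
  · refine ⟨fun x => Metric.infDist x A, Metric.continuous_infDist_pt A, ?_⟩
    ext x
    simp [h.mem_iff_infDist_zero hne]

/-- The defining functions are gathered in one map to the metrizable space `ℕ → ℝ`. -/
lemma FunctionallyClosed.iInter {A : ℕ → Set Z} (h : ∀ n, FunctionallyClosed (A n)) :
    FunctionallyClosed (⋂ n, A n) := by
  choose f hf hA using h
  have h0 : FunctionallyClosed ({0} : Set (ℕ → ℝ)) := isClosed_singleton.functionallyClosed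
  convert h0.preimage (continuous_pi hf) using 1
  ext x
  simp [hA, funext_iff]

lemma FunctionallyClosed.inter {A B : Set Z} (hA : FunctionallyClosed A)
    (hB : FunctionallyClosed B) : FunctionallyClosed (A ∩ B) := by
  obtain ⟨f, hf, rfl⟩ := hA
  obtain ⟨g, hg, rfl⟩ := hB
  have h0 : FunctionallyClosed ({0} : Set (ℝ × ℝ)) := isClosed_singleton.functionallyClosed
  convert h0.preimage (hf.prodMk hg) using 1
  ext x
  simp [Prod.ext_iff]

lemma FunctionallyClosed.union {A B : Set Z} (hA : FunctionallyClosed A)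
    (hB : FunctionallyClosed B) : FunctionallyClosed (A ∪ B) := by
  obtain ⟨f, hf, rfl⟩ := hA
  obtain ⟨g, hg, rfl⟩ := hB
  exact ⟨fun x => f x * g x, hf.mul hg, by ext; simp⟩

lemma IsClopen.functionallyClosed {A : Set Z} (h : IsClopen A) : FunctionallyClosed A := by
  classical
  have h0 : FunctionallyClosed ({true} : Set Bool) := (isClosed_discrete _).functionallyClosed
  have := h0.preimage ((continuous_boolIndicator_iff_isClopen A).2 h)
  rwa [Set.preimage_boolIndicator_true] at this

lemma FunClass.compl {b : Bool} {α : Ordinal.{0}} {A : Set Z} (h : FunClass Z b α A) :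
    FunClass Z (!b) α Aᶜ := by
  induction h with
  | open_ A h => exact .closed_ _ h
  | closed_ A h => exact .open_ _ (by rwa [FunctionallyOpen, compl_compl])
  | union α A β hα hβ _ ih => rw [compl_iUnion]; exact .inter α _ β hα hβ ih
  | inter α A β hα hβ _ ih => rw [compl_iInter]; exact .union α _ β hα hβ ih

lemma FunClass.preimage {b : Bool} {α : Ordinal.{0}} {A : Set Z} (h : FunClass Z b α A)
    {g : W → Z} (hg : Continuous g) : FunClass W b α (g ⁻¹' A) := by
  induction h with
  | open_ A h => exact .open_ _ (FunctionallyClosed.preimage h hg)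
  | closed_ A h => exact .closed_ _ (h.preimage hg)
  | union α A β hα hβ _ ih => rw [preimage_iUnion]; exact .union α _ β hα hβ ih
  | inter α A β hα hβ _ ih => rw [preimage_iInter]; exact .inter α _ β hα hβ ih

lemma FunClass.mono_false {α β : Ordinal.{0}} {A : Set Z} (h : FunClass Z false α A)
    (hαβ : α ≤ β) : FunClass Z false β A := by
  rcases hαβ.eq_or_lt with rfl | hlt
  · exact h
  cases h with
  | closed_ A h =>
    obtain ⟨f, hf, rfl⟩ := h
    -- a zero set is the intersection of the cozero sets `{|f| < 1 / (n + 1)}`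
    have key : f ⁻¹' {0} = ⋂ n : ℕ, {x | 1 / ((n : ℝ) + 1) ≤ |f x|}ᶜ := by
      ext x
      simp only [mem_preimage, mem_singleton_iff, mem_iInter, mem_compl_iff, mem_ofPred_eq, not_le]
      refine ⟨fun h n => by rw [h, abs_zero]; positivity, fun h => ?_⟩
      by_contra hne
      obtain ⟨n, hn⟩ := exists_nat_one_div_lt (abs_pos.2 hne)
      exact lt_asymm hn (h n)
    rw [key]
    refine .inter β _ (fun _ => 0) hlt.ne' (fun _ => hlt) fun n => .open_ _ ?_
    rw [FunctionallyOpen, compl_compl]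
    have hc : IsClosed {y : ℝ | 1 / ((n : ℝ) + 1) ≤ |y|} :=
      isClosed_le continuous_const continuous_abs
    exact hc.functionallyClosed.preimage hf
  | inter α A γ hα hγ h => exact .inter β A γ ((zero_le.trans_lt hlt).ne') (fun n => (hγ n).trans hlt) h

lemma FunClass.mono {b : Bool} {α β : Ordinal.{0}} {A : Set Z} (h : FunClass Z b α A)
    (hαβ : α ≤ β) : FunClass Z b β A := by
  cases b with
  | false => exact h.mono_false hαβ
  | true => simpa using (h.compl.mono_false hαβ).compl

lemma FunClass.union_true {α : Ordinal.{0}} {A B : Set Z} (hA : FunClass Z true α A)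
    (hB : FunClass Z true α B) : FunClass Z true α (A ∪ B) := by
  cases hA with
  | open_ A hA =>
    cases hB with
    | open_ B hB =>
      refine .open_ _ ?_
      rw [FunctionallyOpen, compl_union]
      exact FunctionallyClosed.inter hA hB
    | union _ _ _ h => exact absurd rfl h
  | union _ A β hα hβ hA =>
    cases hB with
    | open_ => exact absurd rfl hα
    | union _ B γ _ hγ hB =>
      -- the two sequences are indexed by `ℕ ⊕ ℕ`, reindexed by `ℕ`
      let e : ℕ ≃ ℕ ⊕ ℕ := Equiv.natSumNatEquivNat.symm
      have : (⋃ n, A n) ∪ (⋃ n, B n) = ⋃ n, Sum.elim A B (e n) := by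
        rw [e.surjective.iUnion_comp (Sum.elim A B), iUnion_sum]; rfl
      rw [this]
      refine .union α _ (fun n => Sum.elim β γ (e n)) hα (fun n => ?_) (fun n => ?_)
      · cases e n <;> simp [hβ, hγ]
      · cases e n <;> simp [hA, hB]

lemma FunClass.inter_false {α : Ordinal.{0}} {A B : Set Z} (hA : FunClass Z false α A)
    (hB : FunClass Z false α B) : FunClass Z false α (A ∩ B) := by
  simpa [compl_union] using (hA.compl.union_true hB.compl).compl

lemma FunClass.union_false {α : Ordinal.{0}} {A B : Set Z} (hA : FunClass Z false α A)
    (hB : FunClass Z false α B) : FunClass Z false α (A ∪ B) := by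
  cases hA with
  | closed_ A hA =>
    cases hB with
    | closed_ B hB => exact .closed_ _ (hA.union hB)
    | inter _ _ _ h => exact absurd rfl h
  | inter _ A β hα hβ hA =>
    cases hB with
    | closed_ => exact absurd rfl hα
    | inter _ B γ _ hγ hB =>
      let e : ℕ ≃ ℕ × ℕ := Nat.pairEquiv.symm
      have : (⋂ n, A n) ∪ (⋂ n, B n) = ⋂ n, (A (e n).1 ∪ B (e n).2) := by
        rw [e.surjective.iInter_comp (fun p : ℕ × ℕ => A p.1 ∪ B p.2), iInter_union_iInter]
        ext; simp
      rw [this]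
      exact .inter α _ (fun n => max (β (e n).1) (γ (e n).2)) hα
        (fun n => max_lt (hβ _) (hγ _))
        (fun n => ((hA _).mono (le_max_left _ _)).union_true ((hB _).mono (le_max_right _ _)))

/-- If every zero set of the subspace `A` is the trace of a zero set of `Z`, then the same holds
for all functional classes. -/
lemma FunClass.exists_extension {A : Set Z}
    (hz : ∀ B : Set A, FunctionallyClosed B → ∃ C : Set Z, FunctionallyClosed C ∧
      Subtype.val ⁻¹' C = B)
    {b : Bool} {α : Ordinal.{0}} {B : Set A} (h : FunClass A b α B) :
    ∃ C : Set Z, FunClass Z b α C ∧ Subtype.val ⁻¹' C = B := by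
  induction h with
  | open_ B h =>
    obtain ⟨C, hC, hCB⟩ := hz _ h
    exact ⟨Cᶜ, .open_ _ (by rwa [FunctionallyOpen, compl_compl]), by
      rw [preimage_compl, hCB, compl_compl]⟩
  | closed_ B h =>
    obtain ⟨C, hC, hCB⟩ := hz _ h
    exact ⟨C, .closed_ _ hC, hCB⟩
  | union α B β hα hβ _ ih =>
    choose C hC hCB using ih
    exact ⟨⋃ n, C n, .union α C β hα hβ hC, by simp only [preimage_iUnion, hCB]⟩
  | inter α B β hα hβ _ ih =>
    choose C hC hCB using ih
    exact ⟨⋂ n, C n, .inter α C β hα hβ hC, by simp only [preimage_iInter, hCB]⟩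

end Classes

/-! ### Universal sets and strictness of the hierarchy on the Cantor space -/

/-- The Cantor space `2^ω`. -/
abbrev Cantor : Type := ℕ → Bool

lemma countable_Iio_of_lt {α : Ordinal.{0}} (hα : α < (Cardinal.aleph 1).ord) :
    (Set.Iio α).Countable := by
  rw [← Cardinal.le_aleph0_iff_set_countable, Cardinal.mk_Iio_ordinal, Cardinal.lift_le_aleph0]
  rw [Cardinal.lt_ord, ← Cardinal.succ_aleph0, Order.lt_succ_iff] at hα
  exact hα

/-- For each `α < ω₁` there is a set of multiplicative class `α` in the square of the Cantor space
whose sections are all the sets of multiplicative class `α`. -/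
lemma exists_universal (α : Ordinal.{0}) (hα : α < (Cardinal.aleph 1).ord) :
    ∃ U : Set (Cantor × Cantor), FunClass (Cantor × Cantor) false α U ∧
      ∀ A : Set Cantor, FunClass Cantor false α A → ∃ c : Cantor, A = {x | (c, x) ∈ U} := by
  induction α using WellFoundedLT.induction with
  | ind α ih =>
  rcases eq_or_ne α 0 with rfl | h0
  · -- a closed set is coded by the set of basic open sets missing it
    obtain ⟨b, hbc, -, hb⟩ := TopologicalSpace.exists_countable_basis Cantor
    obtain ⟨e, he⟩ := hbc.exists_eq_range (by
      obtain ⟨V, hV, -⟩ := hb.exists_subset_of_mem_open (mem_univ (fun _ => true)) isOpen_univ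
      exact ⟨V, hV⟩)
    refine ⟨⋂ n, {p | p.1 n = true → p.2 ∉ e n}, .closed_ _ (IsClosed.functionallyClosed ?_), ?_⟩
    · refine isClosed_iInter fun n => ?_
      have h1 : IsClosed {p : Cantor × Cantor | p.1 n = false} :=
        isClosed_eq (by fun_prop) continuous_const
      have h2 : IsClosed {p : Cantor × Cantor | p.2 ∉ e n} := by
        have : IsOpen (e n) := hb.isOpen (by rw [he]; exact mem_range_self n)
        exact this.isClosed_compl.preimage continuous_snd
      convert h1.union h2 using 1
      ext p
      by_cases h : p.1 n = true <;> simp [h]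
    · intro A hA
      have hAc : IsClosed A := by
        cases hA with
        | closed_ _ h => obtain ⟨f, hf, rfl⟩ := h; exact isClosed_singleton.preimage hf
        | inter _ _ _ h => exact absurd rfl h
      classical
      refine ⟨fun n => decide (Disjoint (e n) A), ?_⟩
      ext x
      simp only [decide_eq_true_eq, mem_ofPred_eq, mem_iInter]
      refine ⟨fun hx n hd hxe => Set.disjoint_left.1 hd hxe hx, fun h => ?_⟩
      by_contra hx
      obtain ⟨V, hV, hxV, hVA⟩ := hb.exists_subset_of_mem_open hx hAc.isOpen_compl
      rw [he] at hV
      obtain ⟨n, rfl⟩ := hV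
      exact h n (Set.disjoint_left.2 fun y hy => hVA hy) hxV
  · have hne : (Set.Iio α).Nonempty := ⟨0, by simpa [pos_iff_ne_zero] using h0⟩
    obtain ⟨β, hβ⟩ := (countable_Iio_of_lt hα).exists_eq_range hne
    have hβlt (n : ℕ) : β n < α := by
      have : β n ∈ Set.Iio α := by rw [hβ]; exact mem_range_self n
      exact this
    choose U hU hUuniv using fun n => ih (β n) (hβlt n) ((hβlt n).trans hα)
    let d : ℕ → Cantor → Cantor := fun m c k => c (Nat.pair m k)
    have hd (m : ℕ) : Continuous (d m) := by fun_prop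
    -- the row `m = ⟨n, k⟩` of the code `c` codes a set of additive class `β n`
    refine ⟨⋂ m : ℕ, (fun p : Cantor × Cantor => (d m p.1, p.2)) ⁻¹' (U m.unpair.1)ᶜ,
      .inter α _ (fun m => β m.unpair.1) h0 (fun m => hβlt _) (fun m => ?_), ?_⟩
    · exact (hU m.unpair.1).compl.preimage
        (((hd m).comp continuous_fst).prodMk continuous_snd)
    · intro A hA
      cases hA with
      | closed_ => exact absurd rfl h0
      | inter _ A γ _ hγ hA =>
        have hcode (m : ℕ) : ∃ c : Cantor, (γ m.unpair.2 = β m.unpair.1 →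
              (A m.unpair.2)ᶜ = {x | (c, x) ∈ U m.unpair.1}) ∧
            (γ m.unpair.2 ≠ β m.unpair.1 → ∅ = {x | (c, x) ∈ U m.unpair.1}) := by
          by_cases h : γ m.unpair.2 = β m.unpair.1
          · obtain ⟨c, hc⟩ := hUuniv m.unpair.1 _ (h ▸ (hA m.unpair.2).compl)
            exact ⟨c, fun _ => hc, fun h' => absurd h h'⟩
          · have : FunClass Cantor false 0 ∅ := .closed_ _ isClosed_empty.functionallyClosed
            obtain ⟨c, hc⟩ := hUuniv m.unpair.1 _ (this.mono zero_le)
            exact ⟨c, fun h' => absurd h' h, fun _ => hc⟩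
        choose c hc1 hc2 using hcode
        refine ⟨fun j => c j.unpair.1 j.unpair.2, ?_⟩
        have hdc (m : ℕ) : d m (fun j => c j.unpair.1 j.unpair.2) = c m := by
          funext k; simp [d]
        ext x
        simp only [mem_iInter, mem_ofPred_eq, mem_preimage, hdc, mem_compl_iff]
        constructor
        · intro hx m hm
          by_cases h : γ m.unpair.2 = β m.unpair.1
          · have : x ∈ (A m.unpair.2)ᶜ := by rw [hc1 m h]; exact hm
            exact this (hx _)
          · have : x ∈ (∅ : Set Cantor) := by rw [hc2 m h]; exact hm
            exact this
        · intro hx k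
          have : γ k ∈ range β := by rw [← hβ]; exact hγ k
          obtain ⟨n, hn⟩ := this
          by_contra hxk
          have h1 := hc1 (Nat.pair n k) (by simp [hn])
          have h2 := hx (Nat.pair n k)
          have : x ∈ (A (Nat.pair n k).unpair.2)ᶜ := by simpa using hxk
          rw [h1] at this
          exact h2 this

/-- Diagonalizing a universal set. -/
lemma exists_true_not_false (α : Ordinal.{0}) (hα : α < (Cardinal.aleph 1).ord) :
    ∃ Q : Set Cantor, FunClass Cantor true α Q ∧ ¬ FunClass Cantor false α Q := by
  obtain ⟨U, hU, huniv⟩ := exists_universal α hα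
  refine ⟨((fun x => (x, x)) ⁻¹' U)ᶜ, (hU.preimage (by fun_prop)).compl, fun h => ?_⟩
  obtain ⟨c, hc⟩ := huniv _ h
  have := Set.ext_iff.1 hc c
  simp at this

/-! ### The countable chain condition in a Cantor cube -/

section Cube

variable {T : Type}

/-- The basic clopen set of the points of `2^T` that agree with `x` on the finite set `K`. -/
def cyl (K : Finset T) (x : T → Bool) : Set (T → Bool) := {w | ∀ t ∈ K, w t = x t}

lemma isOpen_cyl (K : Finset T) (x : T → Bool) : IsOpen (cyl K x) := by
  have : cyl K x = (K : Set T).pi fun t => {x t} := by ext w; simp [cyl, Set.mem_pi]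
  rw [this]
  exact isOpen_set_pi K.finite_toSet fun _ _ => isOpen_discrete _

lemma exists_cyl_subset {O : Set (T → Bool)} (hO : IsOpen O) {x : T → Bool} (hx : x ∈ O) :
    ∃ K : Finset T, cyl K x ⊆ O := by
  obtain ⟨K, u, hu, hKO⟩ := isOpen_pi_iff.1 hO x hx
  exact ⟨K, fun w hw => hKO fun t ht => by rw [hw t ht]; exact (hu t ht).2⟩

open MeasureTheory in
/-- The fair coin-tossing measure on `2^T`, used only to see that `2^T` satisfies the countable
chain condition. -/
noncomputable def coin (T : Type) : Measure (T → Bool) :=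
  Measure.infinitePi fun _ : T => (PMF.uniformOfFintype Bool).toMeasure

instance : MeasureTheory.IsProbabilityMeasure (coin T) := by
  unfold coin; infer_instance

lemma coin_cyl_ne_zero (K : Finset T) (x : T → Bool) : coin T (cyl K x) ≠ 0 := by
  have : cyl K x = (K : Set T).pi fun t => {x t} := by ext w; simp [cyl, Set.mem_pi]
  rw [this, coin, MeasureTheory.Measure.infinitePi_pi _ (fun _ _ => MeasurableSet.of_discrete)]
  rw [Finset.prod_ne_zero_iff]
  intro t _
  rw [PMF.toMeasure_apply_singleton _ _ MeasurableSet.of_discrete]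
  simp

lemma measurableSet_cyl (K : Finset T) (x : T → Bool) : MeasurableSet (cyl K x) := by
  have : cyl K x = (K : Set T).pi fun t => {x t} := by ext w; simp [cyl, Set.mem_pi]
  rw [this]
  exact MeasurableSet.pi K.countable_toSet fun _ _ => MeasurableSet.of_discrete

/-- Every family of basic clopen sets has a countable subfamily with dense union: take a countable
subfamily whose union has the largest possible measure. -/
lemma exists_countable_dense_subfamily (S : Set (Finset T × (T → Bool))) :
    ∃ C ⊆ S, C.Countable ∧ ∀ i ∈ S, cyl i.1 i.2 ⊆ closure (⋃ j ∈ C, cyl j.1 j.2) := by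
  let m : Set (Finset T × (T → Bool)) → ENNReal := fun C => coin T (⋃ j ∈ C, cyl j.1 j.2)
  have hm {C D : Set (Finset T × (T → Bool))} (h : C ⊆ D) : m C ≤ m D :=
    MeasureTheory.measure_mono (biUnion_subset_biUnion_left h)
  let M : Set ENNReal := m '' {C | C ⊆ S ∧ C.Countable}
  obtain ⟨u, -, hu, huM⟩ := exists_seq_tendsto_sSup (S := M)
    ⟨_, ∅, ⟨empty_subset _, countable_empty⟩, rfl⟩ (OrderTop.bddAbove _)
  choose C hC hCu using huM
  have hDS : (⋃ n, C n) ⊆ S := iUnion_subset fun n => (hC n).1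
  have hDc : (⋃ n, C n).Countable := countable_iUnion fun n => (hC n).2
  have hmax : sSup M ≤ m (⋃ n, C n) :=
    le_of_tendsto' hu fun n => (hCu n).symm.trans_le (hm (subset_iUnion C n))
  refine ⟨⋃ n, C n, hDS, hDc, fun i hi => ?_⟩
  set G := ⋃ j ∈ ⋃ n, C n, cyl j.1 j.2 with hG
  have hGm : MeasurableSet G := .biUnion hDc fun j _ => measurableSet_cyl _ _
  have hnull : coin T (cyl i.1 i.2 \ G) = 0 := by
    have h1 : coin T (G ∪ cyl i.1 i.2) ≤ coin T G := by
      have h2 : m (insert i (⋃ n, C n)) ≤ sSup M :=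
        le_sSup ⟨_, ⟨insert_subset hi hDS, hDc.insert i⟩, rfl⟩
      have h3 : m (insert i (⋃ n, C n)) = coin T (G ∪ cyl i.1 i.2) := by
        simp only [m]; rw [biUnion_insert, union_comm]
      rw [← h3]
      exact h2.trans hmax
    rw [← union_sdiff_self, MeasureTheory.measure_union disjoint_sdiff_right
      ((measurableSet_cyl _ _).diff hGm)] at h1
    have h4 : coin T G + coin T (cyl i.1 i.2 \ G) ≤ coin T G + 0 := by simpa using h1
    simpa using (ENNReal.add_le_add_iff_left (MeasureTheory.measure_ne_top _ _)).1 h4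
  intro x hx
  by_contra hxG
  obtain ⟨K, hK⟩ := exists_cyl_subset ((isOpen_cyl i.1 i.2).inter isClosed_closure.isOpen_compl)
    ⟨hx, hxG⟩
  refine coin_cyl_ne_zero K x (MeasureTheory.measure_mono_null (fun w hw => ?_) hnull)
  exact ⟨(hK hw).1, fun h => (hK hw).2 (subset_closure h)⟩

end Cube

/-! ### The space and its two pieces -/

/-- The coordinates of the Cantor cube; over each point of the Cantor space there are uncountably
many of them. -/
abbrev Coord : Type := Cantor × ℝ

/-- The ambient compact space `2^ω × 2^(2^ω × ℝ)`. -/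
abbrev Amb : Type := Cantor × (Coord → Bool)

/-- The piece over `P ⊆ 2^ω`: the pairs `(y, x)` with `y ∈ P` such that `x` is supported by the
coordinates over `P` and does not vanish on the coordinates over `y`. -/
def piece (P : Set Cantor) : Set Amb :=
  {a | a.1 ∈ P ∧ (∃ z : ℝ, a.2 (a.1, z) = true) ∧ ∀ t : Coord, a.2 t = true → t.1 ∈ P}

lemma exists_real_notMem (q : Cantor) {S : Set Coord} (hS : S.Countable) :
    ∃ z : ℝ, (q, z) ∉ S := by
  by_contra! h
  have : (univ : Set ℝ).Countable :=
    (hS.preimage (f := fun z : ℝ => (q, z)) fun a b hab => (Prod.ext_iff.1 hab).2).mono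
      fun z _ => h z
  exact Cardinal.not_countable_real this

/-- A point of the piece over `q ∈ P` can be prescribed on countably many coordinates, as long as
the prescription is supported over `P`. -/
lemma exists_mem_piece {P : Set Cantor} {q : Cantor} (hq : q ∈ P) {S K : Set Coord}
    (hS : S.Countable) (hK : K.Countable) {w x : Coord → Bool}
    (hw : ∀ t ∈ S, w t = true → t.1 ∈ P) (hx : ∀ t ∈ K, x t = true → t.1 ∈ P) :
    ∃ v : Coord → Bool, ((q, v) : Amb) ∈ piece P ∧ (∀ t ∈ S, v t = w t) ∧
      ∀ t ∈ K, t ∉ S → v t = x t := by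
  classical
  refine ⟨fun t => if t ∈ S then w t else if t ∈ K then x t else decide (t.1 = q),
    ⟨hq, ?_, fun t => ?_⟩, fun t ht => by simp [ht], fun t ht hts => by simp [ht, hts]⟩
  · obtain ⟨z, hz⟩ := exists_real_notMem q (hS.union hK)
    rw [mem_union, not_or] at hz
    exact ⟨z, by simp [hz.1, hz.2]⟩
  · by_cases h1 : t ∈ S
    · simpa [h1] using hw t h1
    · by_cases h2 : t ∈ K
      · simpa [h1, h2] using hx t h2
      · simp only [h1, h2, if_false, decide_eq_true_eq]
        rintro rfl
        exact hq

lemma exists_box_subset {O : Set Amb} (hO : IsOpen O) {a : Amb} (ha : a ∈ O)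
    {b : Set (Set Cantor)} (hb : TopologicalSpace.IsTopologicalBasis b) :
    ∃ V ∈ b, a.1 ∈ V ∧ ∃ K : Finset Coord, V ×ˢ cyl K a.2 ⊆ O := by
  obtain ⟨V, W, hV, hW, haV, haW, hVW⟩ := isOpen_prod_iff.1 hO a.1 a.2 ha
  obtain ⟨V', hV', haV', hVV⟩ := hb.exists_subset_of_mem_open haV hV
  obtain ⟨K, hK⟩ := exists_cyl_subset hW haW
  exact ⟨V', hV', haV', K, (prod_mono hVV hK).trans hVW⟩

/-- In a piece, the closure of an open set is the trace of a zero set of the ambient space, because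
by the countable chain condition it depends on countably many coordinates only. -/
lemma exists_functionallyClosed_closure (P : Set Cantor) {O : Set Amb} (hO : IsOpen O) :
    ∃ F : Set Amb, FunctionallyClosed F ∧ F ∩ piece P = closure (O ∩ piece P) ∩ piece P := by
  classical
  obtain ⟨b, hbc, -, hb⟩ := TopologicalSpace.exists_countable_basis Cantor
  -- the cylinders `c`, supported over `P`, such that the box `V × c` lies in `O` on the piece
  let fam : Set Cantor → Set (Finset Coord × (Coord → Bool)) := fun V =>
    {i | (V ×ˢ cyl i.1 i.2) ∩ piece P ⊆ O ∧ ∀ t ∈ i.1, i.2 t = true → t.1 ∈ P}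
  choose C hCfam hCc hCdense using fun V => exists_countable_dense_subfamily (fam V)
  let S : Set Coord := ⋃ V ∈ b, ⋃ i ∈ C V, (i.1 : Set Coord)
  have hS : S.Countable :=
    hbc.biUnion fun V _ => (hCc V).biUnion fun i _ => i.1.countable_toSet
  have hmemS {V i} (hV : V ∈ b) (hi : i ∈ C V) {t : Coord} (ht : t ∈ i.1) : t ∈ S := by
    simp only [S, mem_iUnion]
    exact ⟨V, hV, i, hi, ht⟩
  let G : Set Amb := {a | ∃ V ∈ b, ∃ i ∈ C V, a.1 ∈ V ∧ a.2 ∈ cyl i.1 i.2}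
  let π : Amb → Cantor × (S → Bool) := fun a => (a.1, fun s => a.2 s)
  have hπ : Continuous π := by fun_prop
  have : Countable S := hS.to_subtype
  refine ⟨π ⁻¹' closure (π '' (G ∩ piece P)),
    isClosed_closure.functionallyClosed.preimage hπ, ?_⟩
  ext a
  refine and_congr_left fun haP => ⟨fun ha => ?_, fun ha => ?_⟩
  · rw [mem_closure_iff]
    intro N hN haN
    obtain ⟨W, hW, haW, K, hKN⟩ := exists_box_subset hN haN hb
    -- the projection of the box `W × cyl K a.2` to the coordinates in `S`
    have hopen : IsOpen (W ×ˢ {u : S → Bool | ∀ s : S, s.1 ∈ K → u s = a.2 s}) := by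
      refine (hb.isOpen hW).prod ?_
      have h1 := isOpen_cyl (K.preimage (Subtype.val : S → Coord) Subtype.val_injective.injOn)
        (fun s => a.2 s)
      convert h1 using 1
      ext u
      simp [cyl]
    obtain ⟨_, ⟨hqW, hqK⟩, ⟨q, w⟩, ⟨⟨V, hV, i, hi, hqV, hwi⟩, hqP⟩, rfl⟩ :=
      mem_closure_iff.1 ha _ hopen ⟨haW, fun _ _ => rfl⟩
    obtain ⟨v, hv, hvS, hvK⟩ := exists_mem_piece hqP.1 hS K.countable_toSet
      (fun t _ => hqP.2.2 t) (fun t _ => haP.2.2 t)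
    refine ⟨(q, v), hKN ⟨hqW, fun t ht => ?_⟩,
      (hCfam V hi).1 ⟨⟨hqV, fun t ht => ?_⟩, hv⟩, hv⟩
    · by_cases hts : t ∈ S
      · exact (hvS t hts).trans (hqK ⟨t, hts⟩ ht)
      · exact hvK t ht hts
    · exact (hvS t (hmemS hV hi ht)).trans (hwi t ht)
  · refine image_closure_subset_closure_image hπ ⟨a, ?_, rfl⟩
    rw [mem_closure_iff] at ha ⊢
    intro N hN haN
    obtain ⟨⟨q, w⟩, hqN, hqO, hqP⟩ := ha N hN haN
    obtain ⟨V, hV, hqV, K, hKN⟩ := exists_box_subset (hN.inter hO) ⟨hqN, hqO⟩ hb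
    have hfam : (K, w) ∈ fam V :=
      ⟨fun x hx => (hKN hx.1).2, fun t _ => hqP.2.2 t⟩
    obtain ⟨u, huK, hu⟩ := mem_closure_iff.1 (hCdense V _ hfam (fun _ _ => rfl : w ∈ cyl K w))
      _ (isOpen_cyl K w) (fun _ _ => rfl)
    simp only [mem_iUnion] at hu
    obtain ⟨i, hi, hui⟩ := hu
    obtain ⟨v, hv, hvK, hvi⟩ := exists_mem_piece hqP.1 K.countable_toSet
      i.1.countable_toSet (fun t _ => hqP.2.2 t) ((hCfam V hi).2)
    refine ⟨(q, v), (hKN (show (q, v) ∈ V ×ˢ cyl K w from ⟨hqV, hvK⟩)).1,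
      ⟨V, hV, i, hi, hqV, fun t ht => ?_⟩, hv⟩
    by_cases htK : t ∈ K
    · exact (hvK t htK).trans ((huK t htK).symm.trans (hui t ht))
    · exact hvi t ht htK

/-- Each piece is z-embedded: a zero set `{f = 0}` of the piece is the intersection of the closures
of the sets `{|f| < 1 / (n + 1)}`. -/
lemma piece_zEmbedded (P : Set Cantor) (B : Set (piece P)) (hB : FunctionallyClosed B) :
    ∃ C : Set Amb, FunctionallyClosed C ∧ Subtype.val ⁻¹' C = B := by
  obtain ⟨f, hf, rfl⟩ := hB
  have hO (n : ℕ) : ∃ O : Set Amb, IsOpen O ∧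
      Subtype.val ⁻¹' O = {a : piece P | |f a| < 1 / ((n : ℝ) + 1)} :=
    isOpen_induced_iff.1 (isOpen_lt hf.abs continuous_const)
  choose O hOo hOf using hO
  choose F hF hFO using fun n => exists_functionallyClosed_closure P (hOo n)
  refine ⟨⋂ n, F n, .iInter hF, ?_⟩
  ext a
  have hiff (n : ℕ) : a.1 ∈ F n ↔ a ∈ closure {a : piece P | |f a| < 1 / ((n : ℝ) + 1)} := by
    rw [closure_subtype, ← hOf, Subtype.image_preimage_coe, inter_comm (piece P)]
    have := Set.ext_iff.1 (hFO n) a.1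
    simpa [a.2] using this
  simp only [mem_preimage, mem_iInter, hiff, mem_singleton_iff]
  constructor
  · intro h
    by_contra hne
    obtain ⟨n, hn⟩ := exists_nat_one_div_lt (abs_pos.2 hne)
    have : closure {a : piece P | |f a| < 1 / ((n : ℝ) + 1)} ⊆
        {a | |f a| ≤ 1 / ((n : ℝ) + 1)} :=
      closure_lt_subset_le hf.abs continuous_const
    exact absurd (this (h n)) (not_le.2 hn)
  · intro h n
    refine subset_closure ?_
    simp only [mem_ofPred_eq, h, abs_zero]
    positivity

/-- The point `(y, 1_{(y, z)})`. -/
noncomputable def spike (z : ℝ) (y : Cantor) : Amb :=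
  open Classical in (y, fun t => decide (t = (y, z)))

lemma spike_mem_piece {P : Set Cantor} (z : ℝ) {y : Cantor} (hy : y ∈ P) :
    spike z y ∈ piece P := by
  refine ⟨hy, ⟨z, by simp [spike]⟩, fun t ht => ?_⟩
  obtain rfl : t = (y, z) := by simpa [spike] using ht
  exact hy

/-- By compactness of `2^ω`, a continuous function `f` is within `ε` of `f (y, 0)` at the points
`(y, x)` with `x` vanishing on a suitable finite set of coordinates, uniformly in `y`;
hence `f (y, 1_{(y, z)}) = f (y, 0)` unless `z` is one of countably many exceptions. -/
lemma continuous_spike {f : Amb → ℝ} (hf : Continuous f) :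
    ∃ N : Set ℝ, N.Countable ∧ ∀ z ∉ N, ∀ y, f (spike z y) = f (y, fun _ => false) := by
  have key (ε : ℝ) (hε : 0 < ε) : ∃ K : Finset Coord, ∀ y, ∀ w ∈ cyl K (fun _ => false),
      |f (y, w) - f (y, fun _ => false)| < ε := by
    have hloc (y : Cantor) : ∃ V, IsOpen V ∧ y ∈ V ∧ ∃ K : Finset Coord, ∀ y' ∈ V,
        ∀ w ∈ cyl K (fun _ => false), |f (y', w) - f (y', fun _ => false)| < ε := by
      have hopen : IsOpen {a : Amb | |f a - f (a.1, fun _ => false)| < ε} :=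
        isOpen_lt (by fun_prop) continuous_const
      obtain ⟨V, hV, hyV, K, hK⟩ := exists_box_subset hopen
        (a := (y, fun _ => false)) (by simpa using hε) (b := {V | IsOpen V})
        TopologicalSpace.isTopologicalBasis_opens
      exact ⟨V, hV, hyV, K, fun y' hy' w hw => hK ⟨hy', hw⟩⟩
    choose V hV hyV K hK using hloc
    obtain ⟨s, hs⟩ := isCompact_univ.elim_finite_subcover V hV
      (fun y _ => mem_iUnion.2 ⟨y, hyV y⟩)
    classical
    refine ⟨s.biUnion K, fun y w hw => ?_⟩
    obtain ⟨y', hy's, hyy'⟩ := mem_iUnion₂.1 (hs (mem_univ y))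
    exact hK y' y hyy' w fun t ht => hw t (Finset.mem_biUnion.2 ⟨y', hy's, ht⟩)
  choose K hK using fun n : ℕ => key (1 / ((n : ℝ) + 1)) (by positivity)
  refine ⟨⋃ n, Prod.snd '' (K n : Set Coord),
    countable_iUnion fun n => ((K n).countable_toSet).image _, fun z hz y => ?_⟩
  by_contra hne
  obtain ⟨n, hn⟩ := exists_nat_one_div_lt (abs_pos.2 (sub_ne_zero.2 hne))
  refine lt_asymm hn (hK n y _ fun t ht => ?_)
  have : t ≠ (y, z) := by
    rintro rfl
    exact hz (mem_iUnion.2 ⟨n, _, ht, rfl⟩)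
  simpa using this

/-- Sets of any functional class do not distinguish `(y, 1_{(y, z)})` from `(y, 0)`, for all but
countably many `z`. -/
lemma FunClass.spike_iff {b : Bool} {α : Ordinal.{0}} {C : Set Amb} (h : FunClass Amb b α C) :
    ∃ N : Set ℝ, N.Countable ∧ ∀ z ∉ N, ∀ y, spike z y ∈ C ↔ (y, fun _ => false) ∈ C := by
  have hclosed (A : Set Amb) (h : FunctionallyClosed A) : ∃ N : Set ℝ, N.Countable ∧
      ∀ z ∉ N, ∀ y, spike z y ∈ A ↔ (y, fun _ => false) ∈ A := by
    obtain ⟨f, hf, rfl⟩ := h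
    obtain ⟨N, hN, hNf⟩ := continuous_spike hf
    exact ⟨N, hN, fun z hz y => by simp [hNf z hz y]⟩
  induction h with
  | open_ A h =>
    obtain ⟨N, hN, hNA⟩ := hclosed _ h
    exact ⟨N, hN, fun z hz y => not_iff_not.1 (hNA z hz y)⟩
  | closed_ A h => exact hclosed A h
  | union α A β hα hβ _ ih =>
    choose N hN hNA using ih
    refine ⟨⋃ n, N n, countable_iUnion hN, fun z hz y => ?_⟩
    simp only [mem_iUnion, not_exists] at hz ⊢
    exact exists_congr fun n => hNA n z (hz n) y
  | inter α A β hα hβ _ ih =>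
    choose N hN hNA using ih
    refine ⟨⋃ n, N n, countable_iUnion hN, fun z hz y => ?_⟩
    simp only [mem_iUnion, not_exists, mem_iInter] at hz ⊢
    exact forall_congr' fun n => hNA n z (hz n) y

/-- A coordinate over `y ∈ P` at which a point over `y` does not vanish separates that point from the
piece over the complement of `P`. -/
lemma isOpen_piece (P : Set Cantor) :
    IsOpen {a : ↥(piece P ∪ piece Pᶜ) | a.1 ∈ piece P} := by
  rw [isOpen_iff_forall_mem_open]
  rintro a ⟨hP, ⟨z, hz⟩, -⟩
  refine ⟨{c | c.1.2 (a.1.1, z) = true}, ?_, ?_, hz⟩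
  · rintro c hc
    exact c.2.resolve_right fun h => h.2.2 _ hc hP
  · have hc : Continuous fun c : ↥(piece P ∪ piece Pᶜ) => c.1.2 (a.1.1, z) := by fun_prop
    exact (isOpen_discrete {true}).preimage hc

lemma isClopen_piece (P : Set Cantor) :
    IsClopen {a : ↥(piece P ∪ piece Pᶜ) | a.1 ∈ piece P} := by
  refine ⟨⟨?_⟩, isOpen_piece P⟩
  have heq : {a : ↥(piece P ∪ piece Pᶜ) | a.1 ∈ piece P}ᶜ = {a | a.1 ∈ piece Pᶜ} := by
    ext a
    exact ⟨fun h => a.2.resolve_left h, fun h h' => h.1 h'.1⟩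
  have h := isOpen_piece Pᶜ
  rw [compl_compl] at h
  rw [heq]
  exact h.preimage (continuous_inclusion (union_comm (piece P) (piece Pᶜ)).subset)

/-- for every α < ω₁ there exist a completely regular space `X` and a
subset `E ⊆ X` which is (α+1)-embedded but not α-embedded in `X`. -/
theorem statement12 (α : Ordinal.{0}) (hα : α < (Cardinal.aleph 1).ord) :
    ∃ (X : Type) (τ : TopologicalSpace X), @CompletelyRegularSpace X τ ∧
      ∃ E : Set X, @IsAlphaEmbedded X τ (α + 1) E ∧ ¬ @IsAlphaEmbedded X τ α E := by
  obtain ⟨Q, hQ, hQ'⟩ := exists_true_not_false α hα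
  refine ⟨Amb, inferInstance, inferInstance, piece Q ∪ piece Qᶜ, ?_, ?_⟩
  · intro B hB hBc
    have hext (P : Set Cantor) (hP : piece P ⊆ piece Q ∪ piece Qᶜ) :
        ∃ C : Set Amb, FunClass Amb false (α + 1) C ∧ ∀ a ∈ piece P, a ∈ C ↔ a ∈ B := by
      obtain ⟨C, hC, hCB⟩ := FunClass.exists_extension (piece_zEmbedded P)
        (hBc.preimage (continuous_inclusion hP))
      exact ⟨C, hC, fun a ha => Set.ext_iff.1 hCB ⟨a, ha⟩⟩
    obtain ⟨C₁, hC₁, hCB₁⟩ := hext Q subset_union_left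
    obtain ⟨C₂, hC₂, hCB₂⟩ := hext Qᶜ subset_union_right
    -- both `Q` and its complement are of multiplicative class `α + 1`
    have hQ1 : FunClass Cantor false (α + 1) Q := by
      have := FunClass.inter (α + 1) (fun _ => Q) (fun _ => α) (by simp)
        (fun _ => lt_add_one α) (fun _ => hQ)
      rwa [iInter_const] at this
    have hQ2 : FunClass Cantor false (α + 1) Qᶜ := hQ.compl.mono (lt_add_one α).le
    refine ⟨(C₁ ∩ Prod.fst ⁻¹' Q) ∪ (C₂ ∩ Prod.fst ⁻¹' Qᶜ),
      (hC₁.inter_false (hQ1.preimage continuous_fst)).union_false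
        (hC₂.inter_false (hQ2.preimage continuous_fst)), ?_⟩
    ext a
    constructor
    · rintro ⟨h, ha | ha⟩
      · exact (hCB₁ a ha).1 (h.resolve_right fun h' => h'.2 ha.1).1
      · exact (hCB₂ a ha).1 (h.resolve_left fun h' => ha.1 h'.2).1
    · intro haB
      refine ⟨?_, hB haB⟩
      rcases hB haB with ha | ha
      · exact .inl ⟨(hCB₁ a ha).2 haB, ha.1⟩
      · exact .inr ⟨(hCB₂ a ha).2 haB, ha.1⟩
  · intro h
    obtain ⟨C, hC, hCB⟩ := h (piece Q) subset_union_left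
      ((FunClass.closed_ _ (isClopen_piece Q).functionallyClosed).mono zero_le)
    obtain ⟨N, hN, hNC⟩ := hC.spike_iff
    obtain ⟨z, hz⟩ : ∃ z, z ∉ N := by
      by_contra! hall
      exact Cardinal.not_countable_real (hN.mono fun z _ => hall z)
    -- the section of `C` at the zero point of the cube is `Q`
    refine hQ' ?_
    convert hC.preimage (g := fun y : Cantor => ((y, fun _ => false) : Amb)) (by fun_prop) using 1
    ext y
    rw [mem_preimage, ← hNC z hz y]
    constructor
    · intro hy
      have : spike z y ∈ C ∩ (piece Q ∪ piece Qᶜ) := by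
        rw [hCB]; exact spike_mem_piece z hy
      exact this.1
    · intro hy
      by_contra hyQ
      have : spike z y ∈ piece Q := by
        rw [← hCB]; exact ⟨hy, .inr (spike_mem_piece z hyQ)⟩
      exact hyQ this.1
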